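/- Let H be a commutative Hopf algebra and A(B)^H a Hopf Galois extension. Equip (A⊗_B A)^B with the right H-coaction a⊗a' ↦ (a⊗a'(0)) ⊗ a'(1). Then the Galois map (A⊗_B A)^B ⊗ (A⊗_B A)^B → (A⊗_B A)^B ⊗ H sending u⊗v to u·v(0) ⊗ v(1) (product taken in (A⊗_B A)^B) is surjective. -/

import Mathlib

open TensorProduct LinearMap

noncomputable section

variable {k H A M : Type*} [Field k] [CommRing H] [HopfAlgebra k H]
  [Ring A] [Algebra k A] [AddCommGroup M] [Module k M]

local notation "Δ" => (Coalgebra.comul (R := k) (A := H))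
local notation "εH" => (Coalgebra.counit (R := k) (A := H))
local notation "𝒮" => (HopfAlgebra.antipode (R := k) (A := H))
local notation "mulH" => (LinearMap.mul' k H)
local notation "mulA" => (LinearMap.mul' k A)

/-- Right-hand side of the right-right (anti) Yetter-Drinfeld compatibility:
`m ⊗ h ↦ act (m₍₀₎ ⊗ h⑵) ⊗ s h⑴ * m₍₁₎ * h⑶`, where the comultiplication of `H` is `Dh`,
its multiplication is `mH` and `s` plays the role of the (inverse of the) antipode. -/
def ydRhs (mH : H ⊗[k] H →ₗ[k] H) (Dh : H →ₗ[k] H ⊗[k] H) (s : H →ₗ[k] H)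
    (act : M ⊗[k] H →ₗ[k] M) (ρM : M →ₗ[k] M ⊗[k] H) : M ⊗[k] H →ₗ[k] M ⊗[k] H :=
  lTensor M (mH ∘ₗ TensorProduct.map s mH) ∘ₗ
  (TensorProduct.assoc k M H (H ⊗[k] H)).toLinearMap ∘ₗ
  rTensor (H ⊗[k] H) (rTensor H act ∘ₗ (TensorProduct.assoc k M H H).symm.toLinearMap ∘ₗ
      lTensor M (TensorProduct.comm k H H).toLinearMap) ∘ₗ
  (tensorTensorTensorComm k M H (H ⊗[k] H) H).toLinearMap ∘ₗ
  TensorProduct.map ρM (rTensor H Dh ∘ₗ Dh)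

/-- Right-hand side of the left-right anti-Yetter-Drinfeld compatibility:
`h ⊗ m ↦ act (h⑵ ⊗ m₍₀₎) ⊗ h⑶ * m₍₁₎ * s h⑴`. -/
def aydLRRhs (mH : H ⊗[k] H →ₗ[k] H) (Dh : H →ₗ[k] H ⊗[k] H) (s : H →ₗ[k] H)
    (act : H ⊗[k] M →ₗ[k] M) (ρM : M →ₗ[k] M ⊗[k] H) : H ⊗[k] M →ₗ[k] M ⊗[k] H :=
  TensorProduct.map act
      (mH ∘ₗ lTensor H mH ∘ₗ lTensor H (lTensor H s) ∘ₗ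
        lTensor H (TensorProduct.comm k H H).toLinearMap ∘ₗ
        (TensorProduct.assoc k H H H).toLinearMap) ∘ₗ
  (tensorTensorTensorComm k H (H ⊗[k] H) M H).toLinearMap ∘ₗ
  TensorProduct.map
    ((TensorProduct.assoc k H H H).toLinearMap ∘ₗ
      (TensorProduct.comm k H (H ⊗[k] H)).toLinearMap ∘ₗ lTensor H Dh ∘ₗ Dh) ρM

/-- Right-hand side of the right-left anti-Yetter-Drinfeld compatibility:
`m ⊗ h ↦ s h⑶ * m₍₋₁₎ * h⑴ ⊗ act (m₍₀₎ ⊗ h⑵)`. -/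
def aydRLRhs (mH : H ⊗[k] H →ₗ[k] H) (Dh : H →ₗ[k] H ⊗[k] H) (s : H →ₗ[k] H)
    (act : M ⊗[k] H →ₗ[k] M) (lρ : M →ₗ[k] H ⊗[k] M) : M ⊗[k] H →ₗ[k] H ⊗[k] M :=
  rTensor M (mH ∘ₗ (TensorProduct.comm k H H).toLinearMap ∘ₗ lTensor H s) ∘ₗ
  (TensorProduct.assoc k H H M).symm.toLinearMap ∘ₗ
  lTensor H (TensorProduct.comm k M H).toLinearMap ∘ₗ
  TensorProduct.map mH (rTensor H act ∘ₗ (TensorProduct.assoc k M H H).symm.toLinearMap) ∘ₗ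
  (tensorTensorTensorComm k H M H (H ⊗[k] H)).toLinearMap ∘ₗ
  TensorProduct.map lρ (lTensor H Dh ∘ₗ Dh)

/-- `sandwich p q (a ⊗ (x ⊗ y)) = p x * a * q y`. -/
def sandwich (p q : H →ₗ[k] A) : A ⊗[k] (H ⊗[k] H) →ₗ[k] A :=
  mulA ∘ₗ TensorProduct.map (mulA ∘ₗ TensorProduct.map p LinearMap.id) q ∘ₗ
    rTensor H (TensorProduct.comm k A H).toLinearMap ∘ₗ
    (TensorProduct.assoc k A H H).symm.toLinearMap

/-- The right `H`-action `a · h = g h⑴ * a * f h⑵` attached to a total integral `f` with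
convolution inverse `g`. -/
def intAct (Dh : H →ₗ[k] H ⊗[k] H) (f g : H →ₗ[k] A) : A ⊗[k] H →ₗ[k] A :=
  sandwich g f ∘ₗ lTensor A Dh

/-- The left `H`-action `h · a = f h⑵ * a * g h⑴`. -/
def intActL (Dh : H →ₗ[k] H ⊗[k] H) (f g : H →ₗ[k] A) : H ⊗[k] A →ₗ[k] A :=
  sandwich f g ∘ₗ lTensor A ((TensorProduct.comm k H H).toLinearMap ∘ₗ Dh) ∘ₗ
    (TensorProduct.comm k H A).toLinearMap

/-- The set of coinvariants `B = {a | ρ a = a ⊗ 1}`. -/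
def coinv (ρA : A →ₗ[k] A ⊗[k] H) : Set A := {a : A | ρA a = a ⊗ₜ[k] (1 : H)}

/-- The canonical Galois map `A ⊗ A → A ⊗ H`, `a ⊗ a' ↦ a * a'₍₀₎ ⊗ a'₍₁₎`. -/
def canMap (ρA : A →ₗ[k] A ⊗[k] H) : A ⊗[k] A →ₗ[k] A ⊗[k] H :=
  rTensor H mulA ∘ₗ (TensorProduct.assoc k A A H).symm.toLinearMap ∘ₗ lTensor A ρA

/-- The kernel of `A ⊗ A → A ⊗_B A`: the span of the elements `(a*b) ⊗ a' - a ⊗ (b*a')`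
with `b` a coinvariant; so `A ⊗_B A = (A ⊗ A) ⧸ galRel ρA`. -/
def galRel (ρA : A →ₗ[k] A ⊗[k] H) : Submodule k (A ⊗[k] A) :=
  Submodule.span k {x : A ⊗[k] A |
    ∃ a a' b : A, b ∈ coinv ρA ∧ x = (a * b) ⊗ₜ[k] a' - a ⊗ₜ[k] (b * a')}

/-- The span of the commutators `[A, B]`, `B` the coinvariants; `A_B = A ⧸ commSub ρA`. -/
def commSub (ρA : A →ₗ[k] A ⊗[k] H) : Submodule k A :=
  Submodule.span k {x : A | ∃ a b : A, b ∈ coinv ρA ∧ x = a * b - b * a}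

/-- `δ(h⑴) • s h⑵`, the twisted antipode. -/
def twistS (δl : H →ₗ[k] k) (s : H →ₗ[k] H) (Dh : H →ₗ[k] H ⊗[k] H) : H →ₗ[k] H :=
  (TensorProduct.lid k H).toLinearMap ∘ₗ TensorProduct.map δl s ∘ₗ Dh

/-- The `B`-centralizer `(A ⊗_B A)^B` inside `(A ⊗ A) ⧸ galRel ρA`. -/
def centMU (ρA : A →ₗ[k] A ⊗[k] H) : Set ((A ⊗[k] A) ⧸ galRel ρA) :=
  {z | ∀ b ∈ coinv ρA, ∀ w : A ⊗[k] A, (galRel ρA).mkQ w = z →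
    (galRel ρA).mkQ (rTensor A (LinearMap.mulLeft k b) w) =
      (galRel ρA).mkQ (lTensor A (LinearMap.mulRight k b) w)}

/-!
The bijection `can : A ⊗_B A → A ⊗ H` turns the problem into one about `A ⊗ H`: the centralizer
`(A ⊗_B A)^B` becomes the commutant of `B ⊗ 1`, the coaction becomes `id ⊗ Δ`, and, since `H` is
commutative, right multiplication by the translation element `τ g = can⁻¹ (1 ⊗ g)` becomes
multiplication by the central element `1 ⊗ g`. In particular every `τ g` lies in the centralizer, so
`z · τ (S h⑴) ⊗ τ h⑵` is in the domain of the Galois map, which sends it to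
`z · τ (S h⑴ * h⑵) ⊗ h⑶ = z ⊗ h`.
-/

section General

variable {R : Type*}

theorem rTensor_mkQ_eq_of_rTensor_eq [CommRing R] {N P Q : Type*}
    [AddCommGroup N] [AddCommGroup P] [AddCommGroup Q] [Module R N] [Module R P] [Module R Q]
    [Module.Flat R Q] {f : N →ₗ[R] P} {p : Submodule R N} (hp : ker f ≤ p)
    {x y : N ⊗[R] Q} (hxy : rTensor Q f x = rTensor Q f y) :
    rTensor Q p.mkQ x = rTensor Q p.mkQ y := by
  have mkQ_comp_subtype : p.mkQ ∘ₗ (ker f).subtype = 0 := by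
    ext n
    simpa using hp n.2
  obtain ⟨t, ht⟩ := (Module.Flat.rTensor_exact Q f.exact_subtype_ker_map (x - y)).1
    (by rw [map_sub, hxy, sub_self])
  rw [← sub_eq_zero, ← map_sub, ← ht, ← rTensor_comp_apply, mkQ_comp_subtype, rTensor_zero,
    LinearMap.zero_apply]

/-- The product `(a ⊗ a') (c ⊗ c') = a c ⊗ c' a'` of `S ⊗ Sᵒᵖ`, written on `S ⊗ S`; it induces the
product of `(A ⊗_B A)^B`. -/
def mulMU (R S : Type*) [CommSemiring R] [Semiring S] [Algebra R S] :
    (S ⊗[R] S) ⊗[R] (S ⊗[R] S) →ₗ[R] S ⊗[R] S :=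
  TensorProduct.map (mul' R S) (mul' R S ∘ₗ (TensorProduct.comm R S S).toLinearMap) ∘ₗ
    (tensorTensorTensorComm R S S S S).toLinearMap

@[simp]
theorem mulMU_tmul_tmul {S : Type*} [CommSemiring R] [Semiring S] [Algebra R S] (a a' c c' : S) :
    mulMU R S ((a ⊗ₜ[R] a') ⊗ₜ[R] (c ⊗ₜ[R] c')) = (a * c) ⊗ₜ[R] (c' * a') := by
  simp [mulMU]

theorem commute_one_tmul {S C : Type*} [CommSemiring R] [Semiring S] [Algebra R S]
    [CommSemiring C] [Algebra R C] (c : C) (x : S ⊗[R] C) : Commute ((1 : S) ⊗ₜ[R] c) x :=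
  letI : Algebra C (S ⊗[R] C) := Algebra.TensorProduct.rightAlgebra
  Algebra.commutes c x

open Coalgebra HopfAlgebra in
theorem sum_rTensor_mulLeft_antipode_comul {C ι : Type*} [CommSemiring R] [Semiring C]
    [HopfAlgebra R C] {c : C} (r : Coalgebra.Repr R c ι) :
    ∑ i ∈ r.index, rTensor C (mulLeft R (antipode R (r.left i))) (comul (R := R) (r.right i)) =
      (1 : C) ⊗ₜ[R] c := by
  let Φ : C ⊗[R] (C ⊗[R] C) →ₗ[R] C ⊗[R] C :=
    rTensor C (mul' R C ∘ₗ rTensor C (antipode R)) ∘ₗ (TensorProduct.assoc R C C C).symm.toLinearMap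
  have Φ_tmul (x : C) (Y : C ⊗[R] C) :
      Φ (x ⊗ₜ Y) = rTensor C (mulLeft R (antipode R x)) Y := by
    induction Y with
    | zero => simp
    | add Y Z hY hZ => simp only [tmul_add, map_add, hY, hZ]
    | tmul y z => simp [Φ]
  calc ∑ i ∈ r.index, rTensor C (mulLeft R (antipode R (r.left i))) (comul (r.right i))
      = Φ (lTensor C comul (comul c)) := by simp only [← r.eq, map_sum, lTensor_tmul, Φ_tmul]
    _ = rTensor C (mul' R C ∘ₗ rTensor C (antipode R) ∘ₗ comul) (comul c) := by
      simp only [Φ, ← coassoc_apply, comp_apply, LinearEquiv.coe_coe, LinearEquiv.symm_apply_apply,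
        rTensor_comp_apply]
    _ = (1 : C) ⊗ₜ[R] c := by
      simp [mul_antipode_rTensor_comul, rTensor_comp_apply, Coalgebra.rTensor_counit_comul]

end General

section Coaction

variable {ρA : A →ₗ[k] A ⊗[k] H}

/-- The coaction `a ⊗ a' ↦ (a ⊗ a'₍₀₎) ⊗ a'₍₁₎` of `(A ⊗_B A)^B`, written on `A ⊗ A`. -/
def coactMU (ρA : A →ₗ[k] A ⊗[k] H) : A ⊗[k] A →ₗ[k] (A ⊗[k] A) ⊗[k] H :=
  (TensorProduct.assoc k A A H).symm.toLinearMap ∘ₗ lTensor A ρA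

/-- The Galois map `u ⊗ v ↦ u · v₍₀₎ ⊗ v₍₁₎` of `(A ⊗_B A)^B`, written on `A ⊗ A`. -/
def galoisMU (ρA : A →ₗ[k] A ⊗[k] H) : (A ⊗[k] A) ⊗[k] (A ⊗[k] A) →ₗ[k] (A ⊗[k] A) ⊗[k] H :=
  rTensor H (mulMU k A) ∘ₗ (TensorProduct.assoc k (A ⊗[k] A) (A ⊗[k] A) H).symm.toLinearMap ∘ₗ
    lTensor (A ⊗[k] A) (coactMU ρA)

/-- The action `(a ⊗ a') • X = (a ⊗ 1) * X * ρ a'` of `A ⊗ Aᵒᵖ` on `A ⊗ H`, which corresponds under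
`can` to multiplication from the left in `A ⊗ Aᵒᵖ`. -/
def actMU (ρA : A →ₗ[k] A ⊗[k] H) : A ⊗[k] A →ₗ[k] Module.End k (A ⊗[k] H) :=
  TensorProduct.lift <| (LinearMap.mul k (Module.End k (A ⊗[k] H))).compl₁₂
    (LinearMap.mul k (A ⊗[k] H) ∘ₗ Algebra.TensorProduct.includeLeft.toLinearMap)
    ((LinearMap.mul k (A ⊗[k] H)).flip ∘ₗ ρA)

theorem actMU_tmul (a a' : A) (X : A ⊗[k] H) :
    actMU ρA (a ⊗ₜ a') X = (a ⊗ₜ[k] (1 : H)) * X * ρA a' := by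
  simp [actMU, mul_assoc]

theorem coactMU_tmul (a a' : A) :
    coactMU ρA (a ⊗ₜ a') = rTensor H (TensorProduct.mk k A A a) (ρA a') := by
  have assoc_symm_comp_mk : (TensorProduct.assoc k A A H).symm.toLinearMap ∘ₗ
      TensorProduct.mk k A (A ⊗[k] H) a = rTensor H (TensorProduct.mk k A A a) := by
    ext x h
    simp
  exact LinearMap.congr_fun assoc_symm_comp_mk (ρA a')

theorem canMap_tmul (a a' : A) : canMap ρA (a ⊗ₜ a') = rTensor H (mulLeft k a) (ρA a') := by
  calc canMap ρA (a ⊗ₜ a') = rTensor H (mul' k A) (coactMU ρA (a ⊗ₜ a')) := rfl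
    _ = rTensor H (mulLeft k a) (ρA a') := by
      rw [coactMU_tmul, ← rTensor_comp_apply]
      rfl

theorem canMap_tmul_eq_mul (a a' : A) : canMap ρA (a ⊗ₜ a') = (a ⊗ₜ[k] (1 : H)) * ρA a' := by
  have rTensor_mulLeft : rTensor H (mulLeft k a) = mulLeft k (a ⊗ₜ[k] (1 : H)) := by
    ext x h
    simp
  rw [canMap_tmul, rTensor_mulLeft, mulLeft_apply]

theorem canMap_rTensor_mulLeft (b : A) (w : A ⊗[k] A) :
    canMap ρA (rTensor A (mulLeft k b) w) = (b ⊗ₜ[k] (1 : H)) * canMap ρA w := by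
  induction w with
  | zero => simp
  | add x y hx hy => simp only [map_add, mul_add, hx, hy]
  | tmul a a' => simp [canMap_tmul_eq_mul, ← mul_assoc]

theorem canMap_lTensor_mulRight (hρ_mul : ∀ x y : A, ρA (x * y) = ρA x * ρA y)
    (c : A) (w : A ⊗[k] A) :
    canMap ρA (lTensor A (mulRight k c) w) = canMap ρA w * ρA c := by
  induction w with
  | zero => simp
  | add x y hx hy => simp only [map_add, add_mul, hx, hy]
  | tmul a a' => simp [canMap_tmul_eq_mul, hρ_mul, mul_assoc]

theorem actMU_one_tmul (u : A ⊗[k] A) (h : H) :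
    actMU ρA u ((1 : A) ⊗ₜ h) = canMap ρA u * ((1 : A) ⊗ₜ[k] h) := by
  induction u with
  | zero => simp
  | add x y hx hy => simp only [map_add, LinearMap.add_apply, add_mul, hx, hy]
  | tmul a a' =>
    rw [actMU_tmul, canMap_tmul_eq_mul, mul_assoc, (commute_one_tmul h (ρA a')).eq, mul_assoc]

theorem canMap_mulMU (hρ_mul : ∀ x y : A, ρA (x * y) = ρA x * ρA y) (u v : A ⊗[k] A) :
    canMap ρA (mulMU k A (u ⊗ₜ v)) = actMU ρA u (canMap ρA v) := by
  induction u with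
  | zero => simp
  | add x y hx hy => simp only [map_add, add_tmul, LinearMap.add_apply, hx, hy]
  | tmul a a' =>
    induction v with
    | zero => simp
    | add x y hx hy => simp only [map_add, tmul_add, hx, hy]
    | tmul c c' => simp [canMap_tmul_eq_mul, actMU_tmul, hρ_mul, ← mul_assoc]

theorem rTensor_canMap_coactMU
    (hρ_coassoc : (TensorProduct.assoc k A H H).toLinearMap ∘ₗ rTensor H ρA ∘ₗ ρA =
      lTensor A Δ ∘ₗ ρA) (v : A ⊗[k] A) :
    rTensor H (canMap ρA) (coactMU ρA v) =
      (TensorProduct.assoc k A H H).symm (lTensor A Δ (canMap ρA v)) := by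
  induction v with
  | zero => simp
  | add x y hx hy => simp only [map_add, hx, hy]
  | tmul a a' =>
    have canMap_comp_mk : canMap ρA ∘ₗ TensorProduct.mk k A A a = rTensor H (mulLeft k a) ∘ₗ ρA :=
      LinearMap.ext (canMap_tmul a)
    have coassoc : rTensor H ρA (ρA a') =
        (TensorProduct.assoc k A H H).symm (lTensor A Δ (ρA a')) :=
      (LinearEquiv.eq_symm_apply _).2 (LinearMap.congr_fun hρ_coassoc a')
    calc rTensor H (canMap ρA) (coactMU ρA (a ⊗ₜ a'))
        = rTensor H (rTensor H (mulLeft k a)) (rTensor H ρA (ρA a')) := by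
          rw [coactMU_tmul, ← rTensor_comp_apply, canMap_comp_mk, rTensor_comp_apply]
      _ = (TensorProduct.assoc k A H H).symm
            (rTensor (H ⊗[k] H) (mulLeft k a) (lTensor A Δ (ρA a'))) := by
          simp [coassoc, rTensor_tensor]
      _ = (TensorProduct.assoc k A H H).symm (lTensor A Δ (canMap ρA (a ⊗ₜ a'))) := by
          rw [canMap_tmul, ← comp_apply (rTensor _ _), ← comp_apply (lTensor _ _),
            rTensor_comp_lTensor, lTensor_comp_rTensor]

theorem rTensor_canMap_galoisMU (hρ_mul : ∀ x y : A, ρA (x * y) = ρA x * ρA y)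
    (u v : A ⊗[k] A) :
    rTensor H (canMap ρA) (galoisMU ρA (u ⊗ₜ v)) =
      rTensor H (actMU ρA u) (rTensor H (canMap ρA) (coactMU ρA v)) := by
  simp only [galoisMU, comp_apply, LinearEquiv.coe_coe, lTensor_tmul]
  induction coactMU ρA v with
  | zero => simp
  | add X Y hX hY => simp only [map_add, tmul_add, hX, hY]
  | tmul x h => simp [canMap_mulMU hρ_mul]

theorem rTensor_canMap_galoisMU_of_canMap_eq_one_tmul
    (hρ_coassoc : (TensorProduct.assoc k A H H).toLinearMap ∘ₗ rTensor H ρA ∘ₗ ρA =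
      lTensor A Δ ∘ₗ ρA)
    (hρ_mul : ∀ x y : A, ρA (x * y) = ρA x * ρA y)
    (u : A ⊗[k] A) {v : A ⊗[k] A} {h : H} (hv : canMap ρA v = (1 : A) ⊗ₜ h) :
    rTensor H (canMap ρA) (galoisMU ρA (u ⊗ₜ v)) =
      rTensor H (mulLeft k (canMap ρA u) ∘ₗ TensorProduct.mk k A H 1) (Δ h) := by
  rw [rTensor_canMap_galoisMU hρ_mul, rTensor_canMap_coactMU hρ_coassoc, hv, lTensor_tmul]
  induction Δ h with
  | zero => simp
  | add X Y hX hY => simp only [map_add, tmul_add, hX, hY]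
  | tmul x y => simp [actMU_one_tmul]

theorem mkQ_mem_centMU_iff_commute (hρ_mul : ∀ x y : A, ρA (x * y) = ρA x * ρA y)
    (hGal_ker : ker (canMap ρA) = galRel ρA) (w : A ⊗[k] A) :
    (galRel ρA).mkQ w ∈ centMU ρA ↔
      ∀ b ∈ coinv ρA, Commute (b ⊗ₜ[k] (1 : H)) (canMap ρA w) := by
  have mkQ_eq_iff (x y : A ⊗[k] A) :
      (galRel ρA).mkQ x = (galRel ρA).mkQ y ↔ canMap ρA x = canMap ρA y := by
    rw [← sub_mem_ker_iff, ← sub_mem_ker_iff, Submodule.ker_mkQ, hGal_ker]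
  have centralizes_iff {b : A} (hb : b ∈ coinv ρA) (x : A ⊗[k] A) :
      (galRel ρA).mkQ (rTensor A (mulLeft k b) x) = (galRel ρA).mkQ (lTensor A (mulRight k b) x) ↔
        Commute (b ⊗ₜ[k] (1 : H)) (canMap ρA x) := by
    rw [mkQ_eq_iff, canMap_rTensor_mulLeft, canMap_lTensor_mulRight hρ_mul,
      show ρA b = b ⊗ₜ 1 from hb, commute_iff_eq]
  refine ⟨fun hw b hb ↦ (centralizes_iff hb w).1 (hw b hb w rfl), fun hw b hb x hx ↦ ?_⟩
  rw [centralizes_iff hb, (mkQ_eq_iff x w).1 hx]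
  exact hw b hb

theorem mkQ_tmul_eq_sum_galoisMU
    (hρ_coassoc : (TensorProduct.assoc k A H H).toLinearMap ∘ₗ rTensor H ρA ∘ₗ ρA =
      lTensor A Δ ∘ₗ ρA)
    (hρ_mul : ∀ x y : A, ρA (x * y) = ρA x * ρA y)
    (hGal_ker : ker (canMap ρA) ≤ galRel ρA)
    {τ : H → A ⊗[k] A} (hτ : ∀ g, canMap ρA (τ g) = (1 : A) ⊗ₜ g)
    {ι : Type*} {h : H} (r : Coalgebra.Repr k h ι) (w : A ⊗[k] A) :
    (galRel ρA).mkQ w ⊗ₜ[k] h = ∑ i ∈ r.index, rTensor H (galRel ρA).mkQ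
      (galoisMU ρA (mulMU k A (w ⊗ₜ τ (𝒮 (r.left i))) ⊗ₜ τ (r.right i))) := by
  set φ : H →ₗ[k] A ⊗[k] H := mulLeft k (canMap ρA w) ∘ₗ TensorProduct.mk k A H 1
  have mulLeft_comp (x : H) : mulLeft k (canMap ρA w * ((1 : A) ⊗ₜ x)) ∘ₗ
      TensorProduct.mk k A H 1 = φ ∘ₗ mulLeft k x := by
    ext y
    simp [φ]
  have summand (x y : H) :
      rTensor H (canMap ρA) (galoisMU ρA (mulMU k A (w ⊗ₜ τ (𝒮 x)) ⊗ₜ τ y)) =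
        rTensor H φ (rTensor H (mulLeft k (𝒮 x)) (Δ y)) := by
    rw [rTensor_canMap_galoisMU_of_canMap_eq_one_tmul hρ_coassoc hρ_mul _ (hτ y),
      canMap_mulMU hρ_mul, hτ, actMU_one_tmul, mulLeft_comp, rTensor_comp_apply]
  rw [← rTensor_tmul, ← map_sum]
  apply rTensor_mkQ_eq_of_rTensor_eq hGal_ker
  simp only [map_sum, summand]
  rw [← map_sum, sum_rTensor_mulLeft_antipode_comul]
  simp [φ, ← Algebra.TensorProduct.one_def]

end Coaction

/-- For a commutative Hopf algebra `H` and a Hopf Galois extension `A(B)^H`,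
the Galois-type map `(A ⊗_B A)^B ⊗ (A ⊗_B A)^B → (A ⊗_B A)^B ⊗ H`, `u ⊗ v ↦ u · v₍₀₎ ⊗ v₍₁₎`,
is surjective. -/
theorem commutative_galois_MU_map_surjective
    (ρA : A →ₗ[k] A ⊗[k] H)
    (hρ_coassoc : (TensorProduct.assoc k A H H).toLinearMap ∘ₗ rTensor H ρA ∘ₗ ρA =
      lTensor A Δ ∘ₗ ρA)
    (hρ_counit : (TensorProduct.rid k A).toLinearMap ∘ₗ lTensor A εH ∘ₗ ρA = LinearMap.id)
    (hρ_one : ρA 1 = (1 : A) ⊗ₜ[k] (1 : H))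
    (hρ_mul : ∀ x y : A, ρA (x * y) = ρA x * ρA y)
    (hGal_surj : Function.Surjective (canMap ρA))
    (hGal_ker : LinearMap.ker (canMap ρA) = galRel ρA)
 :
    ∀ z ∈ centMU ρA, ∀ h : H,
      z ⊗ₜ[k] h ∈ Submodule.span k
        {y : ((A ⊗[k] A) ⧸ galRel ρA) ⊗[k] H |
          ∃ u v : A ⊗[k] A, (galRel ρA).mkQ u ∈ centMU ρA ∧ (galRel ρA).mkQ v ∈ centMU ρA ∧
            y = (rTensor H (galRel ρA).mkQ ∘ₗ rTensor H (TensorProduct.map mulA (mulA ∘ₗ (TensorProduct.comm k A A).toLinearMap) ∘ₗ (tensorTensorTensorComm k A A A A).toLinearMap) ∘ₗ (TensorProduct.assoc k (A ⊗[k] A) (A ⊗[k] A) H).symm.toLinearMap ∘ₗ lTensor (A ⊗[k] A) ((TensorProduct.assoc k A A H).symm.toLinearMap ∘ₗ lTensor A ρA)) (u ⊗ₜ[k] v)} := by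
  intro z hz h
  obtain ⟨w, rfl⟩ := (galRel ρA).mkQ_surjective z
  choose τ hτ using fun g : H ↦ hGal_surj ((1 : A) ⊗ₜ g)
  have mem_centMU_iff := mkQ_mem_centMU_iff_commute hρ_mul hGal_ker
  have τ_mem (g : H) : (galRel ρA).mkQ (τ g) ∈ centMU ρA :=
    (mem_centMU_iff _).2 fun b _ ↦ hτ g ▸ (commute_one_tmul g _).symm
  have mul_τ_mem (g : H) : (galRel ρA).mkQ (mulMU k A (w ⊗ₜ τ g)) ∈ centMU ρA := by
    refine (mem_centMU_iff _).2 fun b hb ↦ ?_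
    rw [canMap_mulMU hρ_mul, hτ, actMU_one_tmul]
    exact ((mem_centMU_iff w).1 hz b hb).mul_right (commute_one_tmul g _).symm
  rw [mkQ_tmul_eq_sum_galoisMU hρ_coassoc hρ_mul hGal_ker.le hτ
    (Coalgebra.Repr.arbitrary k h)]
  exact sum_mem fun i _ ↦ Submodule.subset_span ⟨_, _, mul_τ_mem _, τ_mem _, rfl⟩
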